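/- For a partition λ of N and an n-dimensional vector space V over a field of characteristic 0: if λ has at most n rows then the GL(V)-module S_λ V = V^{⊗N} · c_λ is nonzero and irreducible, and if λ has more than n rows then S_λ V = 0. -/

import Mathlib

open scoped TensorProduct

section Schur

variable (K : Type*) [Field K] (V : Type*) [AddCommGroup V] [Module K V]
variable (N : ℕ) (μ : ℕ → ℕ)

/-- The cells of the Young diagram of the partition `μ` of `N` (row `i` has `μ i` boxes;
since `μ` is a partition of `N`, all cells `(i,j)`, `j < μ i`, satisfy `i, j < N`). -/
abbrev YCells : Type := {p : Fin N × Fin N // (p.2 : ℕ) < μ (p.1 : ℕ)}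

/-- The tensor power `V^{⊗N}`, with tensor factors indexed by the cells of `μ`. -/
abbrev TPow : Type _ := ⨂[K] (_ : YCells N μ), V

variable {V}

/-- The action of a permutation of the cells on `V^{⊗N}` by permuting the tensor factors. -/
noncomputable def permMapC (σ : Equiv.Perm (YCells N μ)) : TPow K V N μ →ₗ[K] TPow K V N μ :=
  (PiTensorProduct.reindex K (fun _ : YCells N μ => V) σ).toLinearMap

/-- The diagonal action of `g : V → V` on `V^{⊗N}`. -/
noncomputable def tmapC (g : V →ₗ[K] V) : TPow K V N μ →ₗ[K] TPow K V N μ :=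
  PiTensorProduct.map (fun _ : YCells N μ => g)

/-- The row symmetrizer `a_μ = ∑_{σ ∈ R(μ)} σ`, summing over the permutations preserving
each row of the Young tableau. -/
noncomputable def rowSymm : TPow K V N μ →ₗ[K] TPow K V N μ :=
  ∑ σ ∈ Finset.univ.filter (fun σ : Equiv.Perm (YCells N μ) => ∀ x, ((σ x).1.1 = x.1.1)),
    permMapC K N μ σ

/-- The column antisymmetrizer `b_μ = ∑_{σ ∈ C(μ)} sgn(σ)·σ`, summing over the permutations
preserving each column of the Young tableau. -/
noncomputable def colAntisymm : TPow K V N μ →ₗ[K] TPow K V N μ :=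
  ∑ σ ∈ Finset.univ.filter (fun σ : Equiv.Perm (YCells N μ) => ∀ x, ((σ x).1.2 = x.1.2)),
    ((Equiv.Perm.sign σ : ℤ) : K) • permMapC K N μ σ

/-- The Young symmetrizer `c_μ = a_μ ∘ b_μ` of the partition `μ`. -/
noncomputable def youngSymm : TPow K V N μ →ₗ[K] TPow K V N μ :=
  rowSymm K N μ ∘ₗ colAntisymm K N μ

/-- The Schur module `S_μ V = V^{⊗N} · c_μ`. -/
noncomputable def schurMod : Submodule K (TPow K V N μ) :=
  LinearMap.range (youngSymm K N μ)

end Schur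


namespace SchurAux

theorem sum_lower_aux (A B : Finset ℕ) (hcard : A.card = B.card)
    (hB : ∀ b ∈ B, ∀ a < b, a ∈ B) :
    ∑ b ∈ B, b ≤ ∑ a ∈ A, a ∧ (∑ b ∈ B, b = ∑ a ∈ A, a → A ⊆ B) := by
  have hBr : B = Finset.range B.card := by
    have hsub : ∀ k, k ≤ B.card → Finset.range k ⊆ B := by
      intro k hk i hi
      by_contra hiB
      have : B ⊆ Finset.range i := by
        intro b hb
        rw [Finset.mem_range]
        by_contra hlt
        rcases (not_lt.1 hlt).lt_or_eq with h | h
        · exact hiB (hB b hb i h)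
        · exact hiB (h ▸ hb)
      have := Finset.card_le_card this
      simp at this hi
      omega
    exact (Finset.eq_of_subset_of_card_le (hsub _ le_rfl) (by simp)).symm
  set k := B.card with hk
  have h1 : ∑ a ∈ A \ B, a + ∑ a ∈ A ∩ B, a = ∑ a ∈ A, a := by
    rw [add_comm, Finset.sum_inter_add_sum_sdiff]
  have h2 : ∑ a ∈ B \ A, a + ∑ a ∈ A ∩ B, a = ∑ a ∈ B, a := by
    rw [add_comm, Finset.inter_comm, Finset.sum_inter_add_sum_sdiff]
  have h3 : (A \ B).card * k ≤ ∑ a ∈ A \ B, a := by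
    have := Finset.card_nsmul_le_sum (A \ B) (fun a => a) k (by
      intro x hx
      rw [hBr] at hx
      simp at hx
      exact hx.2)
    simpa using this
  have h4 : ∑ a ∈ B \ A, (a + 1) ≤ (B \ A).card * k := by
    have := Finset.sum_le_card_nsmul (B \ A) (fun a => a + 1) k (by
      intro x hx
      rw [hBr] at hx
      simp at hx
      exact hx.1)
    simpa using this
  rw [Finset.sum_add_distrib] at h4
  have h5 : (A \ B).card = (B \ A).card := by
    have e1 := Finset.card_sdiff_add_card_inter A B
    have e2 := Finset.card_sdiff_add_card_inter B A
    rw [Finset.inter_comm] at e2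
    omega
  simp only [Finset.sum_const, smul_eq_mul, mul_one] at h4
  rw [h5] at h3
  refine ⟨by omega, fun h => ?_⟩
  have : (A \ B).card = 0 := by omega
  rw [Finset.card_eq_zero] at this
  exact Finset.sdiff_eq_empty_iff_subset.1 this

/-- The combinatorial lemma on tableaux. -/
theorem exists_row_perm {X : Type*} [Fintype X] [DecidableEq X] (r c : X → ℕ)
    (hinj : ∀ x y, r x = r y → c x = c y → x = y)
    (hlow : ∀ x, ∀ j < c x, ∃ y, r y = r x ∧ c y = j)
    (h : Equiv.Perm X) (hh : ∀ x y, x ≠ y → r x = r y → c (h x) ≠ c (h y)) :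
    ∃ p : Equiv.Perm X, (∀ x, r (p x) = r x) ∧ ∀ x, c (p x) = c (h x) := by
  classical
  let row : ℕ → Finset X := fun i => Finset.univ.filter (fun x => r x = i)
  let A : ℕ → Finset ℕ := fun i => (row i).image (fun x => c (h x))
  let B : ℕ → Finset ℕ := fun i => (row i).image c
  have hAinj : ∀ i, Set.InjOn (fun x => c (h x)) (row i : Set X) := by
    intro i x hx y hy hxy
    by_contra hne
    simp [row] at hx hy
    exact hh x y hne (hx.trans hy.symm) hxy
  have hBinj : ∀ i, Set.InjOn c (row i : Set X) := by
    intro i x hx y hy hxy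
    simp [row] at hx hy
    exact hinj x y (hx.trans hy.symm) hxy
  have key : ∀ i, ∑ b ∈ B i, b ≤ ∑ a ∈ A i, a ∧ (∑ b ∈ B i, b = ∑ a ∈ A i, a → A i ⊆ B i) := by
    intro i
    apply sum_lower_aux
    · rw [Finset.card_image_of_injOn (hAinj i), Finset.card_image_of_injOn (hBinj i)]
    · intro b hb a hab
      simp only [B, row, Finset.mem_image, Finset.mem_filter, Finset.mem_univ, true_and] at hb ⊢
      obtain ⟨x, hx, rfl⟩ := hb
      obtain ⟨y, hy, hy'⟩ := hlow x a hab
      exact ⟨y, hy.trans hx, hy'⟩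
  let I : Finset ℕ := Finset.univ.image r
  have hsA : ∑ i ∈ I, ∑ a ∈ A i, a = ∑ x, c (h x) := by
    rw [← Finset.sum_fiberwise_of_maps_to (s := Finset.univ) (t := I) (g := r)
      (fun x _ => Finset.mem_image_of_mem _ (Finset.mem_univ x))]
    refine Finset.sum_congr rfl fun i _ => ?_
    exact Finset.sum_image (f := fun a => a) (hAinj i)
  have hsB : ∑ i ∈ I, ∑ a ∈ B i, a = ∑ x, c x := by
    rw [← Finset.sum_fiberwise_of_maps_to (s := Finset.univ) (t := I) (g := r)
      (fun x _ => Finset.mem_image_of_mem _ (Finset.mem_univ x))]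
    refine Finset.sum_congr rfl fun i _ => ?_
    exact Finset.sum_image (f := fun a => a) (hBinj i)
  have hAB : ∑ i ∈ I, ∑ a ∈ B i, a = ∑ i ∈ I, ∑ a ∈ A i, a := by
    rw [hsA, hsB, Equiv.sum_comp h c]
  have heq := (Finset.sum_eq_sum_iff_of_le (fun i _ => (key i).1)).1 hAB
  have hex : ∀ x, ∃ y, r y = r x ∧ c y = c (h x) := by
    intro x
    have hi : r x ∈ I := Finset.mem_image_of_mem _ (Finset.mem_univ x)
    have : c (h x) ∈ A (r x) := Finset.mem_image_of_mem (fun x => c (h x)) (by simp [row])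
    have := (key (r x)).2 (heq _ hi) this
    simpa [B, row] using this
  choose p hp1 hp2 using hex
  have pinj : Function.Injective p := by
    intro x y hxy
    by_contra hne
    refine hh x y hne ?_ ?_
    · rw [← hp1, hxy, hp1]
    · rw [← hp2, hxy, hp2]
  exact ⟨Equiv.ofBijective p (Finite.injective_iff_bijective.1 pinj), hp1, hp2⟩

section Density

variable {K : Type*} [Field K] [CharZero K] {V : Type*} [AddCommGroup V] [Module K V]
  [FiniteDimensional K V] {X : Type*} [Fintype X] [DecidableEq X]

open Polynomial in
theorem multi_zero_of_units (M : MultilinearMap K (fun _ : X => V →ₗ[K] V) K)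
    (hM : ∀ g : V ≃ₗ[K] V, M (fun _ => g.toLinearMap) = 0) (h : V →ₗ[K] V) :
    M (fun _ => h) = 0 := by
  let p : K[X] := ∑ s : Finset X,
    C (M (s.piecewise (fun _ => LinearMap.id) (fun _ => h))) * Polynomial.X ^ s.card
  have hp : ∀ t, p.eval t = M (fun _ => t • LinearMap.id + h) := by
    intro t
    have := M.map_add_univ (fun _ => t • LinearMap.id) (fun _ => h)
    change _ = M ((fun _ => t • LinearMap.id) + (fun _ => h))
    rw [this, eval_finsetSum]
    refine Finset.sum_congr rfl fun s _ => ?_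
    have h2 := M.map_piecewise_smul (fun _ => t)
      (s.piecewise (fun _ => LinearMap.id) (fun _ => h)) s
    rw [show s.piecewise (fun i => (fun _ => t) i • s.piecewise
      (fun _ => (LinearMap.id : V →ₗ[K] V)) (fun _ => h) i)
      (s.piecewise (fun _ => LinearMap.id) (fun _ => h)) = s.piecewise
      (fun _ => t • LinearMap.id) (fun _ => h) from ?_] at h2
    · rw [h2, Finset.prod_const, smul_eq_mul, eval_mul, eval_C, eval_pow, eval_X, mul_comm]
    · ext i : 1
      by_cases hi : i ∈ s <;> simp [hi]
  have hpq : p * (-h).charpoly = 0 := by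
    apply Polynomial.funext
    intro t
    rw [eval_mul, eval_zero, hp]
    by_cases ht : (-h).charpoly.eval t = 0
    · rw [ht, mul_zero]
    · rw [LinearMap.eval_charpoly] at ht
      have hh : algebraMap K (Module.End K V) t - -h = t • LinearMap.id + h := by
        ext v; simp [Module.algebraMap_end_apply]
      rw [hh] at ht
      have := hM (LinearMap.equivOfDetNeZero _ ht)
      rw [show M (fun _ => t • LinearMap.id + h) = 0 from this, zero_mul]
  have hp0 : p = 0 := (mul_eq_zero.1 hpq).resolve_right (LinearMap.charpoly_monic _).ne_zero
  have := hp 0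
  rw [hp0] at this
  simpa using this.symm

theorem alt_sum_zero {K : Type*} [Field K] {X : Type*} [Fintype X] [DecidableEq X] (r : X → X) (hr : ¬ Function.Surjective r) :
    ∑ s : Finset X, (if ∀ i, r i ∈ s then (-1 : K) ^ s.card else 0) = 0 := by
  simp only [Function.Surjective, not_forall, not_exists] at hr
  obtain ⟨j, hj⟩ := hr
  refine Finset.sum_involution (fun s _ => if j ∈ s then s.erase j else insert j s) ?_ ?_ ?_ ?_
  · intro s _
    by_cases hs : j ∈ s
    · have h1 : (∀ i, r i ∈ s.erase j) ↔ ∀ i, r i ∈ s := by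
        simp [Finset.mem_erase, hj]
      simp only [hs, if_true, h1]
      have := Finset.card_erase_add_one hs
      rw [← this]
      split_ifs <;> simp [pow_succ]
    · have h1 : (∀ i, r i ∈ insert j s) ↔ ∀ i, r i ∈ s := by
        simp [Finset.mem_insert, hj]
      simp only [hs, if_false, h1, Finset.card_insert_of_notMem hs]
      split_ifs <;> simp [pow_succ]
  · intro s _ _ h
    by_cases hs : j ∈ s
    · simp only [hs, if_true] at h
      have : j ∈ s.erase j := by rw [h]; exact hs
      simp at this
    · simp only [hs, if_false] at h
      exact hs (h ▸ Finset.mem_insert_self j s)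
  · intro s _; exact Finset.mem_univ _
  · intro s _
    by_cases hs : j ∈ s <;> simp [hs]

theorem polarize {K : Type*} [Field K] {V : Type*} [AddCommGroup V] [Module K V]
    {X : Type*} [Fintype X] [DecidableEq X] (M : MultilinearMap K (fun _ : X => V →ₗ[K] V) K)
    (hM : ∀ h : V →ₗ[K] V, M (fun _ => h) = 0) (g : X → (V →ₗ[K] V)) :
    ∑ σ : Equiv.Perm X, M (fun x => g (σ x)) = 0 := by
  have h0 : ∑ s : Finset X, (-1 : K) ^ s.card * M (fun _ => ∑ j ∈ s, g j) = 0 := by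
    simp [hM]
  have h1 : ∀ s : Finset X, (-1 : K) ^ s.card * M (fun _ => ∑ j ∈ s, g j) =
      ∑ r : X → X, (if ∀ i, r i ∈ s then (-1 : K) ^ s.card else 0) * M (fun x => g (r x)) := by
    intro s
    rw [M.map_sum_finset (fun _ j => g j) (fun _ => s), Finset.mul_sum]
    simp only [ite_mul, zero_mul]
    rw [← Finset.sum_filter]
    refine Finset.sum_congr ?_ fun _ _ => rfl
    ext r; simp
  simp only [h1] at h0
  rw [Finset.sum_comm] at h0
  simp only [← Finset.sum_mul] at h0
  have h2 : ∀ r : X → X, (∑ s : Finset X, (if ∀ i, r i ∈ s then (-1 : K) ^ s.card else 0)) =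
      if Function.Bijective r then (-1 : K) ^ (Fintype.card X) else 0 := by
    intro r
    split_ifs with hr
    · rw [Finset.sum_eq_single Finset.univ]
      · simp
      · intro s _ hs
        rw [if_neg]
        intro h
        apply hs
        ext x
        obtain ⟨y, rfl⟩ := hr.2 x
        simp [h]
      · simp
    · apply alt_sum_zero
      intro h
      exact hr (Finite.surjective_iff_bijective.1 h)
  simp only [h2, ite_mul, zero_mul] at h0
  rw [← Finset.sum_filter, ← Finset.mul_sum] at h0
  have h3 := (mul_eq_zero.1 h0).resolve_left (by simp)
  rw [← h3]
  refine Finset.sum_bij (fun σ _ => (σ : X → X)) ?_ ?_ ?_ ?_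
  · intro σ _; rw [Finset.mem_filter]; exact ⟨Finset.mem_univ _, σ.bijective⟩
  · intro σ _ τ _ h; exact Equiv.coe_fn_injective h
  · intro r hr
    rw [Finset.mem_filter] at hr
    replace hr := hr.2
    exact ⟨Equiv.ofBijective r hr, by simp, rfl⟩
  · intro _ _; rfl

end Density

section GroupAlgebra

open MonoidAlgebra Equiv

variable (K : Type*) [Field K] {X : Type*} [Fintype X] [DecidableEq X] (r c : X → ℕ)

/-- Row symmetrizer in the group algebra. -/
noncomputable def rowE : MonoidAlgebra K (Perm X) :=
  ∑ σ ∈ Finset.univ.filter (fun σ : Perm X => ∀ x, r (σ x) = r x), single σ 1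

/-- Column antisymmetrizer in the group algebra. -/
noncomputable def colE : MonoidAlgebra K (Perm X) :=
  ∑ σ ∈ Finset.univ.filter (fun σ : Perm X => ∀ x, c (σ x) = c x),
    single σ (((Perm.sign σ : ℤ) : K))

variable {r c}

theorem inv_pres {X : Type*} {f : X → ℕ} {p : Perm X} (hp : ∀ x, f (p x) = f x) (x : X) :
    f (p⁻¹ x) = f x := by
  have := hp (p⁻¹ x)
  simpa using this.symm

theorem single_mul_rowE {p : Perm X} (hp : ∀ x, r (p x) = r x) :
    single p 1 * rowE K r = rowE K r := by
  unfold rowE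
  rw [Finset.mul_sum]
  refine Finset.sum_bij (fun σ _ => p * σ) ?_ ?_ ?_ ?_
  · intro σ hσ
    simp only [Finset.mem_filter, Finset.mem_univ, true_and] at hσ ⊢
    intro x; simp [hp, hσ]
  · intro σ _ τ _ h; exact mul_left_cancel h
  · intro σ hσ
    simp only [Finset.mem_filter, Finset.mem_univ, true_and] at hσ ⊢
    refine ⟨p⁻¹ * σ, fun x => ?_, by simp⟩
    rw [Perm.mul_apply, inv_pres hp, hσ]
  · intro σ _; simp

theorem colE_mul_single {q : Perm X} (hq : ∀ x, c (q x) = c x) :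
    colE K c * single q 1 = (((Perm.sign q : ℤ) : K)) • colE K c := by
  unfold colE
  rw [Finset.sum_mul, Finset.smul_sum]
  refine Finset.sum_bij (fun σ _ => σ * q) ?_ ?_ ?_ ?_
  · intro σ hσ
    simp only [Finset.mem_filter, Finset.mem_univ, true_and] at hσ ⊢
    intro x; simp [hq, hσ]
  · intro σ _ τ _ h; exact mul_right_cancel h
  · intro σ hσ
    simp only [Finset.mem_filter, Finset.mem_univ, true_and] at hσ ⊢
    refine ⟨σ * q⁻¹, fun x => ?_, by simp⟩
    rw [Perm.mul_apply, hσ, inv_pres hq]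
  · intro σ _
    have : ((Perm.sign q : ℤ) : K) * ((Perm.sign q : ℤ) : K) = 1 := by
      rw [← Int.cast_mul, ← Units.val_mul, Int.units_mul_self]; simp
    rw [single_mul_single, smul_single', Perm.sign_mul]
    push_cast
    rw [mul_one, mul_comm ((Perm.sign σ : ℤ) : K), ← mul_assoc, this, one_mul]

/-- The Young symmetrizer in the group algebra. -/
noncomputable def youngE (r c : X → ℕ) : MonoidAlgebra K (Perm X) := rowE K r * colE K c

theorem coeff_youngE_one (hinj : ∀ x y, r x = r y → c x = c y → x = y) :
    (youngE K r c).coeff 1 = 1 := by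
  unfold youngE rowE colE
  rw [Finset.sum_mul_sum]
  simp only [coeff_sum, Finsupp.finsetSum_apply, single_mul_single, coeff_single,
    Finsupp.single_apply, one_mul]
  rw [Finset.sum_eq_single 1]
  · rw [Finset.sum_eq_single 1]
    · simp
    · intro q _ hq; simp [hq]
    · simp
  · intro p hp hp1
    refine Finset.sum_eq_zero fun q hq => ?_
    rw [if_neg]
    intro h
    apply hp1
    simp only [Finset.mem_filter, Finset.mem_univ, true_and] at hp hq
    have : p = q⁻¹ := eq_inv_of_mul_eq_one_left h
    ext x
    refine hinj _ _ (hp x) ?_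
    rw [this, inv_pres hq]; rfl
  · simp

theorem vn [CharZero K] (hinj : ∀ x y, r x = r y → c x = c y → x = y)
    (hlow : ∀ x, ∀ j < c x, ∃ y, r y = r x ∧ c y = j)
    (z : MonoidAlgebra K (Perm X))
    (h1 : ∀ p : Perm X, (∀ x, r (p x) = r x) → single p 1 * z = z)
    (h2 : ∀ q : Perm X, (∀ x, c (q x) = c x) → z * single q 1 = ((Perm.sign q : ℤ) : K) • z)
    (g : Perm X) :
    (∃ p q : Perm X, (∀ x, r (p x) = r x) ∧ (∀ x, c (q x) = c x) ∧ g = p * q ∧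
      z.coeff g = ((Perm.sign q : ℤ) : K) * z.coeff 1) ∨
    ((¬ ∃ p q : Perm X, (∀ x, r (p x) = r x) ∧ (∀ x, c (q x) = c x) ∧ g = p * q) ∧
      z.coeff g = 0) := by
  have e1 : ∀ p : Perm X, (∀ x, r (p x) = r x) → ∀ g, z.coeff (p * g) = z.coeff g := by
    intro p hp g
    have := congrArg (fun y => y.coeff (p * g)) (h1 p hp)
    simpa using this.symm
  have e2 : ∀ q : Perm X, (∀ x, c (q x) = c x) → ∀ g,
      z.coeff g = ((Perm.sign q : ℤ) : K) * z.coeff (g * q) := by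
    intro q hq g
    have := congrArg (fun y => y.coeff (g * q)) (h2 q hq)
    simpa using this
  by_cases hg : ∃ p q : Perm X, (∀ x, r (p x) = r x) ∧ (∀ x, c (q x) = c x) ∧ g = p * q
  · left
    obtain ⟨p, q, hp, hq, rfl⟩ := hg
    refine ⟨p, q, hp, hq, rfl, ?_⟩
    rw [e1 p hp, e2 q⁻¹ (inv_pres hq)]
    simp
  · right
    refine ⟨hg, ?_⟩
    have : ¬ ∀ x y, x ≠ y → r x = r y → c (g⁻¹ x) ≠ c (g⁻¹ y) := by
      intro hh
      obtain ⟨p, hp, hp'⟩ := exists_row_perm r c hinj hlow g⁻¹ hh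
      refine hg ⟨p⁻¹, p * g, inv_pres hp, fun x => ?_, by simp⟩
      simp [hp']
    push Not at this
    obtain ⟨x, y, hxy, hr, hc⟩ := this
    have s1 : ∀ w, r (swap x y w) = r w := by
      intro w
      rw [swap_apply_def]; split_ifs with h h'
      · rw [h, hr]
      · rw [h', hr]
      · rfl
    have s2 : ∀ w, c (swap (g⁻¹ x) (g⁻¹ y) w) = c w := by
      intro w
      rw [swap_apply_def]; split_ifs with h h'
      · rw [h, hc]
      · rw [h', hc]
      · rfl
    have e3 := e2 _ s2 g
    have e4 : g * swap (g⁻¹ x) (g⁻¹ y) = swap x y * g := by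
      rw [Equiv.mul_swap_eq_swap_mul]; simp
    rw [e4, e1 _ s1, Perm.sign_swap (by simpa using hxy)] at e3
    simp at e3
    exact self_eq_neg.1 e3

theorem youngE_row (p : Perm X) (hp : ∀ x, r (p x) = r x) :
    single p 1 * youngE K r c = youngE K r c := by
  rw [youngE, ← mul_assoc, single_mul_rowE K hp]

theorem youngE_col (q : Perm X) (hq : ∀ x, c (q x) = c x) :
    youngE K r c * single q 1 = ((Perm.sign q : ℤ) : K) • youngE K r c := by
  rw [youngE, mul_assoc, colE_mul_single K hq, mul_smul_comm]

theorem eq_smul_youngE [CharZero K] (hinj : ∀ x y, r x = r y → c x = c y → x = y)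
    (hlow : ∀ x, ∀ j < c x, ∃ y, r y = r x ∧ c y = j)
    (z : MonoidAlgebra K (Perm X))
    (h1 : ∀ p : Perm X, (∀ x, r (p x) = r x) → single p 1 * z = z)
    (h2 : ∀ q : Perm X, (∀ x, c (q x) = c x) → z * single q 1 = ((Perm.sign q : ℤ) : K) • z) :
    z = z.coeff 1 • youngE K r c := by
  set w := z - z.coeff 1 • youngE K r c with hw
  have hw0 : w.coeff 1 = 0 := by
    simp [hw, coeff_youngE_one K hinj]
  have := vn K hinj hlow w
    (by intro p hp; rw [hw, mul_sub, h1 p hp, mul_smul_comm, youngE_row K p hp])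
    (by intro q hq; rw [hw, sub_mul, h2 q hq, smul_mul_assoc, youngE_col K q hq, smul_sub,
          smul_comm])
  have hw1 : w = 0 := by
    ext g
    rcases this g with ⟨p, q, -, -, -, h⟩ | ⟨-, h⟩
    · rw [h, hw0]; simp
    · rw [h]; simp
  exact sub_eq_zero.1 hw1

theorem youngE_sandwich [CharZero K] (hinj : ∀ x y, r x = r y → c x = c y → x = y)
    (hlow : ∀ x, ∀ j < c x, ∃ y, r y = r x ∧ c y = j)
    (z : MonoidAlgebra K (Perm X)) :
    youngE K r c * z * youngE K r c =
      (youngE K r c * z * youngE K r c).coeff 1 • youngE K r c := by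
  apply eq_smul_youngE K hinj hlow
  · intro p hp
    rw [← mul_assoc, ← mul_assoc, youngE_row K p hp]
  · intro q hq
    rw [mul_assoc, youngE_col K q hq, mul_smul_comm]

theorem coeff_mul_one_comm {X : Type*} (x y : MonoidAlgebra K (Perm X)) :
    (x * y).coeff 1 = (y * x).coeff 1 := by
  rw [coeff_mul_apply_left, coeff_mul_apply_right]
  refine Finsupp.sum_congr fun g _ => ?_
  simp [mul_comm]

theorem sum_coeff_eq (z : MonoidAlgebra K (Perm X)) :
    ∑ σ : Perm X, z.coeff σ • single σ (1 : K) = z := by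
  ext g
  simp [coeff_sum]

theorem sum_coeff_sandwich (y : MonoidAlgebra K (Perm X)) :
    ∑ σ : Perm X, (y * single σ 1 * y).coeff 1 • single σ⁻¹ (1 : K) = y * y := by
  rw [← sum_coeff_eq K (y * y), ← Equiv.sum_comp (Equiv.inv (Perm X))]
  refine Finset.sum_congr rfl fun σ _ => ?_
  rw [mul_assoc, coeff_mul_one_comm, mul_assoc]
  simp

theorem youngE_sq_ne [CharZero K] (hinj : ∀ x y, r x = r y → c x = c y → x = y) :
    youngE K r c * youngE K r c ≠ 0 := by
  intro h0
  have hn : IsNilpotent (LinearMap.mulLeft K (youngE K r c)) := by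
    refine ⟨2, ?_⟩
    rw [LinearMap.pow_mulLeft, pow_two, h0, LinearMap.mulLeft_zero_eq_zero]
  have ht := (LinearMap.isNilpotent_trace_of_isNilpotent hn).eq_zero
  rw [LinearMap.trace_eq_matrix_trace K (MonoidAlgebra.basis (Perm X) K), Matrix.trace] at ht
  have : ∀ g : Perm X, (LinearMap.toMatrix (MonoidAlgebra.basis (Perm X) K)
      (MonoidAlgebra.basis (Perm X) K) (LinearMap.mulLeft K (youngE K r c))).diag g = 1 := by
    intro g
    rw [Matrix.diag_apply, LinearMap.toMatrix_apply]
    simp [MonoidAlgebra.basis, coeffLinearEquiv, coeff_youngE_one K hinj]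
  simp only [this] at ht
  simp at ht

end GroupAlgebra
section Main

open MonoidAlgebra Equiv PiTensorProduct

variable (K : Type*) [Field K] {V : Type*} [AddCommGroup V] [Module K V]
variable (N : ℕ) (μ : ℕ → ℕ)

/-- row index of a cell -/
def rowIdx (x : YCells N μ) : ℕ := x.1.1
/-- column index of a cell -/
def colIdx (x : YCells N μ) : ℕ := x.1.2

theorem cell_inj (x y : YCells N μ) (h1 : rowIdx N μ x = rowIdx N μ y) (h2 : colIdx N μ x = colIdx N μ y) :
    x = y :=
  Subtype.ext (Prod.ext (Fin.ext h1) (Fin.ext h2))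

theorem cell_low (x : YCells N μ) (j : ℕ) (hj : j < colIdx N μ x) :
    ∃ y, rowIdx N μ y = rowIdx N μ x ∧ colIdx N μ y = j :=
  ⟨⟨(x.1.1, ⟨j, hj.trans x.1.2.2⟩), lt_trans hj x.2⟩, rfl, rfl⟩

theorem permMapC_tprod (σ : Perm (YCells N μ)) (f : YCells N μ → V) :
    permMapC K N μ σ (tprod K f) = tprod K (fun x => f (σ⁻¹ x)) := by
  unfold permMapC
  exact reindex_tprod σ f

/-- the permutation representation -/
noncomputable def repHom : Perm (YCells N μ) →* Module.End K (TPow K V N μ) where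
  toFun σ := permMapC K N μ σ
  map_one' := by
    apply PiTensorProduct.ext
    ext f
    simp only [LinearMap.compMultilinearMap_apply, permMapC_tprod]
    rfl
  map_mul' σ τ := by
    apply PiTensorProduct.ext
    ext f
    simp only [LinearMap.compMultilinearMap_apply, permMapC_tprod, Module.End.mul_apply]
    rfl

/-- the representation of the group algebra -/
noncomputable def rho : MonoidAlgebra K (Perm (YCells N μ)) →ₐ[K] Module.End K (TPow K V N μ) :=
  MonoidAlgebra.lift K _ _ (repHom K N μ)

theorem rho_single (σ : Perm (YCells N μ)) (k : K) :
    rho K N μ (V := V) (single σ k) = k • permMapC K N μ σ := by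
  unfold rho
  rw [MonoidAlgebra.lift_single]; rfl

theorem rho_row : rho K N μ (V := V) (rowE K (rowIdx N μ)) = rowSymm K N μ := by
  unfold rowE rowSymm
  rw [map_sum]
  refine Finset.sum_congr ?_ fun σ _ => by rw [rho_single, one_smul]
  ext σ; simp [rowIdx, Fin.ext_iff]

theorem rho_col : rho K N μ (V := V) (colE K (colIdx N μ)) = colAntisymm K N μ := by
  unfold colE colAntisymm
  rw [map_sum]
  refine Finset.sum_congr ?_ fun σ _ => by rw [rho_single]
  ext σ; simp [colIdx, Fin.ext_iff]

theorem rho_young : rho K N μ (V := V) (youngE K (rowIdx N μ) (colIdx N μ)) = youngSymm K N μ := by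
  rw [youngE, map_mul, rho_row, rho_col]; rfl

/-- the pure functional attached to a family of functionals -/
noncomputable def pureF (ξ : YCells N μ → (V →ₗ[K] K)) : TPow K V N μ →ₗ[K] K :=
  PiTensorProduct.lift ((MultilinearMap.mkPiAlgebra K (YCells N μ) K).compLinearMap ξ)

theorem pureF_tprod (ξ : YCells N μ → (V →ₗ[K] K)) (f : YCells N μ → V) :
    pureF K N μ ξ (tprod K f) = ∏ x, ξ x (f x) := by
  simp [pureF]

theorem rank_one (ξ : YCells N μ → (V →ₗ[K] K)) (u : YCells N μ → V) (σ : Perm (YCells N μ))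
    (w : TPow K V N μ) :
    pureF K N μ ξ (permMapC K N μ σ⁻¹ w) • permMapC K N μ σ (tprod K u) =
      PiTensorProduct.map (fun x => (ξ (σ⁻¹ x)).smulRight (u (σ⁻¹ x))) w := by
  induction w using PiTensorProduct.induction_on with
  | smul_tprod k f =>
    simp only [map_smul, permMapC_tprod, pureF_tprod, PiTensorProduct.map_tprod,
      LinearMap.smulRight_apply, smul_assoc]
    rw [MultilinearMap.map_smul_univ]
    congr 2
    rw [← Equiv.prod_comp σ⁻¹]
    refine Finset.prod_congr rfl fun x _ => ?_
    rw [show σ⁻¹⁻¹ (σ⁻¹ x) = x from σ.apply_symm_apply x]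
  | add x y hx hy => rw [map_add, map_add, map_add, add_smul, hx, hy]

theorem stable [CharZero K] [FiniteDimensional K V] (W : Submodule K (TPow K V N μ))
    (hW : ∀ g : V ≃ₗ[K] V, ∀ x ∈ W, tmapC K N μ g.toLinearMap x ∈ W)
    (ξ : YCells N μ → (V →ₗ[K] K)) (w : TPow K V N μ) (hw : w ∈ W) (s : TPow K V N μ) :
    ∑ σ : Perm (YCells N μ), pureF K N μ ξ (permMapC K N μ σ⁻¹ w) • permMapC K N μ σ s ∈ W := by
  induction s using PiTensorProduct.induction_on with
  | smul_tprod k u =>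
    simp only [map_smul]
    simp only [smul_comm _ k]
    rw [← Finset.smul_sum]
    apply W.smul_mem
    simp only [rank_one]
    by_contra hnot
    obtain ⟨ψ, hψ, hψW⟩ := Submodule.exists_le_ker_of_notMem hnot
    let M : MultilinearMap K (fun _ : YCells N μ => V →ₗ[K] V) K :=
      (ψ ∘ₗ LinearMap.applyₗ w).compMultilinearMap (PiTensorProduct.mapMultilinear K _ _)
    have hM : ∀ g, M g = ψ (PiTensorProduct.map g w) := fun g => rfl
    have h1 := multi_zero_of_units M (fun g => by
      rw [hM]; exact hψW (hW g w hw))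
    have h2 := polarize M h1 (fun x => (ξ x).smulRight (u x))
    apply hψ
    rw [map_sum, ← h2, ← Equiv.sum_comp (Equiv.inv (Perm (YCells N μ)))]
    refine Finset.sum_congr rfl fun σ _ => ?_
    rw [hM]
    rfl
  | add x y hx hy =>
    simp only [map_add, smul_add, Finset.sum_add_distrib]
    exact W.add_mem hx hy

theorem irred [CharZero K] [FiniteDimensional K V] (W : Submodule K (TPow K V N μ))
    (hWS : W ≤ schurMod K N μ (V := V))
    (hW : ∀ g : V ≃ₗ[K] V, ∀ x ∈ W, tmapC K N μ g.toLinearMap x ∈ W) :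
    W = ⊥ ∨ W = schurMod K N μ (V := V) := by
  by_cases hbot : W = ⊥
  · exact Or.inl hbot
  right
  refine le_antisymm hWS ?_
  obtain ⟨w, hw, hw0⟩ := Submodule.exists_mem_ne_zero_of_ne_bot hbot
  set e := youngE K (rowIdx N μ) (colIdx N μ) with he
  have hsand := youngE_sandwich K (cell_inj N μ) (cell_low N μ)
  rw [← he] at hsand
  have hne : e * e ≠ 0 := youngE_sq_ne K (cell_inj N μ)
  obtain ⟨m, hm⟩ : ∃ m : K, e * e = m • e := ⟨_, by simpa using hsand 1⟩
  have hm0 : m ≠ 0 := by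
    rintro rfl
    exact hne (by rw [hm, zero_smul])
  have hS : ∀ x ∈ schurMod K N μ (V := V), rho K N μ e x = m • x := by
    rintro x ⟨u, rfl⟩
    rw [← rho_young, ← he, ← Module.End.mul_apply, ← map_mul, hm, map_smul]; rfl
  -- a pure functional not vanishing on `w`
  obtain ⟨ξ, hξ⟩ : ∃ ξ, pureF K N μ ξ w ≠ 0 := by
    by_contra hall
    push Not at hall
    apply hw0
    let b := Module.finBasis K V
    let B := Basis.piTensorProduct (fun _ : YCells N μ => b)
    apply B.repr.injective
    rw [map_zero]
    ext p
    have : B.coord p = pureF K N μ (fun x => b.coord (p x)) := by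
      apply PiTensorProduct.ext
      ext f
      simp [pureF_tprod, B]
    have h2 := hall (fun x => b.coord (p x))
    rw [← this] at h2
    simpa using h2
  rintro s ⟨u, hu⟩
  rw [← rho_young, ← he] at hu
  have hst := stable K N μ W hW ξ w hw s
  set y := ∑ σ : Perm (YCells N μ), pureF K N μ ξ (permMapC K N μ σ⁻¹ w) • permMapC K N μ σ s
    with hy
  have h1 : m • y = (m * m * pureF K N μ ξ w) • s := by
    rw [← hS y (hWS hst), hy, map_sum]
    have h2 : ∀ σ : Perm (YCells N μ), rho K N μ e
        (pureF K N μ ξ (permMapC K N μ σ⁻¹ w) • permMapC K N μ σ s) =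
        (pureF K N μ ξ (rho K N μ ((e * single σ 1 * e).coeff 1 • single σ⁻¹ (1 : K)) w)) • s := by
      intro σ
      have h3 : rho K N μ e (permMapC K N μ σ s) = (e * single σ 1 * e).coeff 1 • s := by
        have h4 : permMapC K N μ σ s = rho K N μ (single σ 1) s := by
          rw [rho_single, one_smul]
        rw [h4, ← hu, ← Module.End.mul_apply, ← Module.End.mul_apply, ← map_mul, ← map_mul]
        conv_lhs => rw [hsand]
        rw [map_smul]; rfl
      rw [map_smul, h3, map_smul, rho_single, one_smul, LinearMap.smul_apply, map_smul,
        smul_eq_mul, mul_comm, mul_smul]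
    simp only [h2]
    rw [← Finset.sum_smul, ← map_sum, ← LinearMap.sum_apply, ← map_sum, sum_coeff_sandwich, hm,
      map_smul, LinearMap.smul_apply, hS w (hWS hw), map_smul, map_smul, smul_eq_mul, smul_eq_mul,
      mul_assoc]
  have h5 : (m * m * pureF K N μ ξ w) • s ∈ W := h1 ▸ W.smul_mem m hst
  exact (W.smul_mem_iff (mul_ne_zero (mul_ne_zero hm0 hm0) hξ)).1 h5

theorem nonzero [CharZero K] [FiniteDimensional K V] (hanti : Antitone μ)
    (hn : μ (Module.finrank K V) = 0) : schurMod K N μ (V := V) ≠ ⊥ := by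
  intro hbot
  have hrow : ∀ x : YCells N μ, rowIdx N μ x < Module.finrank K V := by
    intro x
    by_contra h
    have h1 := hanti (not_lt.1 h)
    have h2 : colIdx N μ x < μ (rowIdx N μ x) := x.2
    omega
  let b := Module.finBasis K V
  let f : YCells N μ → Fin (Module.finrank K V) := fun x => ⟨rowIdx N μ x, hrow x⟩
  have h0 : youngSymm K N μ (tprod K (fun x => b (f x))) = 0 := by
    have : youngSymm K N μ (tprod K (fun x => b (f x))) ∈ schurMod K N μ (V := V) := ⟨_, rfl⟩
    rw [hbot] at this
    exact this
  have h1 := congrArg (pureF K N μ (fun x => b.coord (f x))) h0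
  have h2 : ∀ σ : Perm (YCells N μ), pureF K N μ (fun x => b.coord (f x))
      (permMapC K N μ σ (tprod K (fun x => b (f x)))) =
      if ∀ x, rowIdx N μ (σ⁻¹ x) = rowIdx N μ x then 1 else 0 := by
    intro σ
    rw [permMapC_tprod, pureF_tprod]
    simp only [Module.Basis.coord_apply, Module.Basis.repr_self, Finsupp.single_apply]
    rw [Finset.prod_ite_zero]
    simp [f]
  rw [map_zero, ← rho_young, youngE, rowE, colE, Finset.sum_mul_sum] at h1
  simp only [map_sum, LinearMap.sum_apply, single_mul_single, rho_single, LinearMap.smul_apply,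
    map_smul, h2, one_mul, smul_eq_mul] at h1
  have h3 : ∀ p ∈ Finset.univ.filter
      (fun σ : Perm (YCells N μ) => ∀ x, rowIdx N μ (σ x) = rowIdx N μ x),
      ∑ q ∈ Finset.univ.filter (fun σ : Perm (YCells N μ) => ∀ x, colIdx N μ (σ x) = colIdx N μ x),
      ((Perm.sign q : ℤ) : K) * (if ∀ x, rowIdx N μ ((p * q)⁻¹ x) = rowIdx N μ x then 1 else 0) = 1 := by
    intro p hp
    simp only [Finset.mem_filter, Finset.mem_univ, true_and] at hp
    rw [Finset.sum_eq_single 1]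
    · simp only [mul_one]
      rw [if_pos (inv_pres hp)]; simp
    · intro q hq hq1
      simp only [Finset.mem_filter, Finset.mem_univ, true_and] at hq
      rw [if_neg, mul_zero]
      intro h
      apply hq1
      have : q⁻¹ = 1 := by
        ext1 x
        refine cell_inj N μ _ _ ?_ (inv_pres hq x)
        have h4 := h (p x)
        rw [mul_inv_rev, Perm.mul_apply,
          show p⁻¹ (p x) = x from p.symm_apply_apply x] at h4
        rw [h4, hp]; rfl
      exact inv_eq_one.1 this
    · simp
  rw [Finset.sum_congr rfl h3, Finset.sum_const, nsmul_eq_mul, mul_one, Nat.cast_eq_zero,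
    Finset.card_eq_zero] at h1
  have : (1 : Perm (YCells N μ)) ∈ (∅ : Finset (Perm (YCells N μ))) := by
    rw [← h1]; simp
  simp at this

theorem vanish [CharZero K] [FiniteDimensional K V] (hanti : Antitone μ) (hμN : μ N = 0)
    (hn : 0 < μ (Module.finrank K V)) : schurMod K N μ (V := V) = ⊥ := by
  have hnN : Module.finrank K V < N := by
    by_contra h
    have := hanti (not_lt.1 h)
    omega
  let b := Module.finBasis K V
  let B := Basis.piTensorProduct (fun _ : YCells N μ => b)
  have hcol : colAntisymm K N μ (V := V) = 0 := by
    apply B.ext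
    intro f
    have hB : B f = tprod K (fun x => b (f x)) := by simp [B]
    rw [hB, LinearMap.zero_apply]
    let cell : Fin (Module.finrank K V + 1) → YCells N μ := fun i =>
      ⟨(⟨i, by omega⟩, ⟨0, by omega⟩), lt_of_lt_of_le hn (hanti (by simpa using i.is_le))⟩
    have hcell : Function.Injective cell := by
      intro i j hij
      have := congrArg (rowIdx N μ) hij
      exact Fin.ext this
    obtain ⟨i, j, hij, hf⟩ := Fintype.exists_ne_map_eq_of_card_lt (fun i => f (cell i)) (by simp)
    set τ := swap (cell i) (cell j) with hτ
    have h1 : permMapC K N μ τ (tprod K (fun x => b (f x))) = tprod K (fun x => b (f x)) := by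
      rw [permMapC_tprod]
      congr 1
      ext x
      congr 1
      rw [hτ, swap_inv, swap_apply_def]
      split_ifs with h h'
      · rw [h]; exact hf.symm
      · rw [h']; exact hf
      · rfl
    have hτc : ∀ x, colIdx N μ (τ x) = colIdx N μ x := by
      intro x
      rw [hτ, swap_apply_def]
      split_ifs with h h'
      · rw [h]; rfl
      · rw [h']; rfl
      · rfl
    have h2 := colE_mul_single K hτc
    rw [hτ, Perm.sign_swap (hcell.ne hij), ← hτ] at h2
    have h3 := congrArg (fun z => rho K N μ (V := V) z (tprod K (fun x => b (f x)))) h2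
    simp only [map_mul, rho_single, one_smul, Module.End.mul_apply, h1, map_smul, rho_col,
      LinearMap.smul_apply] at h3
    simp only [Units.val_neg, Units.val_one, Int.cast_neg, Int.cast_one, neg_smul, one_smul] at h3
    have h5 : (2 : K) • colAntisymm K N μ (tprod K (fun x => b (f x))) = 0 := by
      rw [two_smul]
      nth_rewrite 1 [h3]
      exact neg_add_cancel _
    exact (smul_eq_zero.1 h5).resolve_left two_ne_zero
  rw [schurMod, youngSymm, hcol, LinearMap.comp_zero, LinearMap.range_zero]

end Main

end SchurAux

/-- Let `λ` be a partition of `N` (encoded by an antitone `μ : ℕ → ℕ` with `μ N = 0` and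
`∑_{i<N} μ i = N`) and let `V` be an `n`-dimensional vector space over a field of
characteristic `0`.  If `λ` has at most `n` rows (i.e. `μ n = 0`), then the `GL(V)`-module
`S_λ V = V^{⊗N}·c_λ` is nonzero and irreducible; if `λ` has more than `n` rows
(i.e. `μ n > 0`), then `S_λ V = 0`. -/
theorem stmt13 {K : Type*} [Field K] [CharZero K]
    (V : Type*) [AddCommGroup V] [Module K V] [FiniteDimensional K V]
    (n : ℕ) (hdim : Module.finrank K V = n)
    (N : ℕ) (μ : ℕ → ℕ) (hanti : Antitone μ) (hμN : μ N = 0)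
    (hsum : ∑ i ∈ Finset.range N, μ i = N) :
    (μ n = 0 →
      schurMod K N μ (V := V) ≠ ⊥ ∧
      ∀ W : Submodule K (TPow K V N μ), W ≤ schurMod K N μ (V := V) →
        (∀ g : V ≃ₗ[K] V, ∀ x ∈ W, tmapC K N μ g.toLinearMap x ∈ W) →
        W = ⊥ ∨ W = schurMod K N μ (V := V)) ∧
    (0 < μ n → schurMod K N μ (V := V) = ⊥) := by
  subst hdim
  exact ⟨fun h => ⟨SchurAux.nonzero K N μ hanti h, fun W hWS hW => SchurAux.irred K N μ W hWS hW⟩,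
    fun h => SchurAux.vanish K N μ hanti hμN h⟩
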